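/- arXiv:2212.06777 — 3 statements merged into one kernel-verified Lean document; each statement's English description precedes it below -/
import Mathlib

section
/- Let n ≥ 2 be an integer, γ = 1 − √((n−2)/(2(n−1))), and T = I_n − γ J_n/n. For every y ∈ ℝ^n, setting η = T y and μ_k = Σ_{j=1}^n y_j^k, the following identities hold: Σ_{j=1}^n η_j = (1−γ) μ₁; Σ_{j=1}^n η_j² = μ₂ − γ(2−γ) μ₁²/n; and Σ_{1≤j<k≤n} (η_j + η_k)² = (n−2) μ₂. -/
theorem aux_pairs (n : ℕ) (f : Fin n → ℝ) :
    (∑ p ∈ Finset.univ.filter (fun p : Fin n × Fin n => p.1 < p.2),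
        (f p.1 + f p.2) ^ 2) = ((n : ℝ) - 2) * (∑ j, f j ^ 2) + (∑ j, f j) ^ 2 := by
  have h1 : ∑ p : Fin n × Fin n, (f p.1 + f p.2) ^ 2
      = 2 * n * (∑ j, f j ^ 2) + 2 * (∑ j, f j) ^ 2 := by
    rw [Fintype.sum_prod_type]
    simp only [add_sq, Finset.sum_add_distrib, ← Finset.mul_sum, ← Finset.sum_mul]
    simp [← Finset.mul_sum]
    ring
  have h2 : ∑ p : Fin n × Fin n, (f p.1 + f p.2) ^ 2
      = ∑ p : Fin n × Fin n, (if p.1 < p.2 then (f p.1 + f p.2) ^ 2 else 0)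
      + ∑ p : Fin n × Fin n, (if p.2 < p.1 then (f p.1 + f p.2) ^ 2 else 0)
      + ∑ p : Fin n × Fin n, (if p.1 = p.2 then (f p.1 + f p.2) ^ 2 else 0) := by
    rw [← Finset.sum_add_distrib, ← Finset.sum_add_distrib]
    refine Finset.sum_congr rfl fun p _ => ?_
    rcases lt_trichotomy p.1 p.2 with h | h | h
    · simp [h, h.not_gt, h.ne]
    · simp [h]
    · simp [h, h.not_gt, h.ne']
  have h3 : ∑ p : Fin n × Fin n, (if p.2 < p.1 then (f p.1 + f p.2) ^ 2 else 0)
      = ∑ p : Fin n × Fin n, (if p.1 < p.2 then (f p.1 + f p.2) ^ 2 else 0) := by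
    refine Fintype.sum_equiv (Equiv.prodComm _ _) _ _ fun p => ?_
    simp [add_comm]
  have h4 : ∑ p : Fin n × Fin n, (if p.1 = p.2 then (f p.1 + f p.2) ^ 2 else 0)
      = 4 * ∑ j, f j ^ 2 := by
    rw [Fintype.sum_prod_type, Finset.mul_sum]
    refine Finset.sum_congr rfl fun j _ => ?_
    simp only [Finset.sum_ite_eq, Finset.mem_univ, if_true]
    ring
  rw [Finset.sum_filter]
  linarith

theorem stmt14 (n : ℕ) (hn : 2 ≤ n) (y : Fin n → ℝ)
    (γ : ℝ) (hγ : γ = 1 - Real.sqrt (((n : ℝ) - 2) / (2 * ((n : ℝ) - 1))))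
    (T : Matrix (Fin n) (Fin n) ℝ)
    (hT : T = 1 - (γ / n) • Matrix.of (fun _ _ => (1 : ℝ)))
    (η : Fin n → ℝ) (hη : η = T.mulVec y) :
    (∑ j, η j) = (1 - γ) * ∑ j, y j ∧
    (∑ j, η j ^ 2) = (∑ j, y j ^ 2) - γ * (2 - γ) * (∑ j, y j) ^ 2 / n ∧
    (∑ p ∈ Finset.univ.filter (fun p : Fin n × Fin n => p.1 < p.2),
        (η p.1 + η p.2) ^ 2) = ((n : ℝ) - 2) * ∑ j, y j ^ 2 := by
  have hn2 : (2 : ℝ) ≤ n := by exact_mod_cast hn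
  have hn0 : (n : ℝ) ≠ 0 := by linarith
  have hn1 : (n : ℝ) - 1 ≠ 0 := by linarith
  have hg : (1 - γ) ^ 2 = ((n : ℝ) - 2) / (2 * ((n : ℝ) - 1)) := by
    rw [hγ, sub_sub_cancel, Real.sq_sqrt]
    exact div_nonneg (by linarith) (by linarith)
  have he : ∀ j, η j = y j - γ / n * ∑ i, y i := by
    intro j
    rw [hη, hT, Matrix.sub_mulVec, Matrix.one_mulVec, Matrix.smul_mulVec]
    simp [Matrix.mulVec, dotProduct]
  have e1 : (∑ j, η j) = (1 - γ) * ∑ j, y j := by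
    simp only [he, Finset.sum_sub_distrib, Finset.sum_const, Finset.card_univ, Fintype.card_fin,
      nsmul_eq_mul]
    field_simp
  have e2 : (∑ j, η j ^ 2) = (∑ j, y j ^ 2) - γ * (2 - γ) * (∑ j, y j) ^ 2 / n := by
    simp only [he, sub_sq, Finset.sum_add_distrib, Finset.sum_sub_distrib, Finset.sum_const,
      Finset.card_univ, Fintype.card_fin, nsmul_eq_mul, ← Finset.sum_mul, ← Finset.mul_sum]
    field_simp
    ring
  refine ⟨e1, e2, ?_⟩
  have hg2 : γ * (2 - γ) = n / (2 * ((n : ℝ) - 1)) := by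
    have : γ * (2 - γ) = 1 - (1 - γ) ^ 2 := by ring
    rw [this, hg]
    field_simp
    ring
  rw [aux_pairs, e1, e2, mul_pow, hg, hg2]
  field_simp
  ring
end

section
/- Let n ≥ 2 be an integer, γ = 1 − √((n−2)/(2(n−1))), and T = I_n − γ J_n/n. For every y ∈ ℝ^n, setting η = T y and μ_k = Σ_{j=1}^n y_j^k, one has Σ_{1≤j<k≤n} (η_j + η_k)⁴ = (n−8) μ₄ + 3 μ₂² + ( 4(1−2γ) + 32γ/n ) μ₁ μ₃ − ( 24γ(1−γ)/n + 48γ²/n² ) μ₁² μ₂ + ( 8γ²(1−γ)(3−γ)/n² + 8γ³(4−γ)/n³ ) μ₁⁴. -/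
theorem pair_sum (n : ℕ) (η : Fin n → ℝ) :
    (∑ p ∈ Finset.univ.filter (fun p : Fin n × Fin n => p.1 < p.2),
        (η p.1 + η p.2) ^ 4) =
      ((n : ℝ) - 8) * (∑ j, η j ^ 4) + 4 * (∑ j, η j) * (∑ j, η j ^ 3)
        + 3 * (∑ j, η j ^ 2) ^ 2 := by
  have hfull : ∑ i : Fin n, ∑ j : Fin n, (η i + η j) ^ 4 =
      2 * n * (∑ j, η j ^ 4) + 8 * (∑ j, η j) * (∑ j, η j ^ 3)
        + 6 * (∑ j, η j ^ 2) ^ 2 := by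
    have e : ∀ i j, (η i + η j) ^ 4 = η i ^ 4 + 4 * η i ^ 3 * η j + 6 * η i ^ 2 * η j ^ 2
        + 4 * η i * η j ^ 3 + η j ^ 4 := by intros; ring
    simp only [e, Finset.sum_add_distrib, ← Finset.mul_sum, ← Finset.sum_mul, Finset.sum_const,
      Finset.card_univ, Fintype.card_fin, nsmul_eq_mul]
    ring
  have hsym : ∑ i : Fin n, ∑ j : Fin n, (if j < i then (η i + η j) ^ 4 else 0) =
      ∑ i : Fin n, ∑ j : Fin n, (if i < j then (η i + η j) ^ 4 else 0) := by
    rw [Finset.sum_comm]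
    simp only [add_comm]
  have hsplit : ∑ i : Fin n, ∑ j : Fin n, (η i + η j) ^ 4 =
      ∑ i : Fin n, ∑ j : Fin n, (if i < j then (η i + η j) ^ 4 else 0) +
      ∑ i : Fin n, ∑ j : Fin n, (if j < i then (η i + η j) ^ 4 else 0) +
      ∑ i : Fin n, ∑ j : Fin n, (if i = j then (η i + η j) ^ 4 else 0) := by
    simp only [← Finset.sum_add_distrib]
    refine Finset.sum_congr rfl fun i _ => Finset.sum_congr rfl fun j _ => ?_
    rcases lt_trichotomy i j with h | h | h
    · simp [h, h.not_gt, h.ne]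
    · simp [h]
    · simp [h, h.not_gt, h.ne']
  have hdiag : ∑ i : Fin n, ∑ j : Fin n, (if i = j then (η i + η j) ^ 4 else 0) =
      16 * ∑ j, η j ^ 4 := by
    simp only [Finset.sum_ite_eq, Finset.mem_univ, if_true, Finset.mul_sum]
    refine Finset.sum_congr rfl fun i _ => ?_
    ring
  rw [Finset.sum_filter, Fintype.sum_prod_type]
  rw [hsym, hdiag, hfull] at hsplit
  linarith

theorem stmt15 (n : ℕ) (hn : 2 ≤ n) (y : Fin n → ℝ)
    (γ : ℝ) (hγ : γ = 1 - Real.sqrt (((n : ℝ) - 2) / (2 * ((n : ℝ) - 1))))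
    (T : Matrix (Fin n) (Fin n) ℝ)
    (hT : T = 1 - (γ / n) • Matrix.of (fun _ _ => (1 : ℝ)))
    (η : Fin n → ℝ) (hη : η = T.mulVec y)
    (μ₁ μ₂ μ₃ μ₄ : ℝ)
    (hμ₁ : μ₁ = ∑ j, y j) (hμ₂ : μ₂ = ∑ j, y j ^ 2)
    (hμ₃ : μ₃ = ∑ j, y j ^ 3) (hμ₄ : μ₄ = ∑ j, y j ^ 4) :
    (∑ p ∈ Finset.univ.filter (fun p : Fin n × Fin n => p.1 < p.2),
        (η p.1 + η p.2) ^ 4) =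
      ((n : ℝ) - 8) * μ₄ + 3 * μ₂ ^ 2 + (4 * (1 - 2 * γ) + 32 * γ / n) * μ₁ * μ₃ -
        (24 * γ * (1 - γ) / n + 48 * γ ^ 2 / (n : ℝ) ^ 2) * μ₁ ^ 2 * μ₂ +
        (8 * γ ^ 2 * (1 - γ) * (3 - γ) / (n : ℝ) ^ 2 +
          8 * γ ^ 3 * (4 - γ) / (n : ℝ) ^ 3) * μ₁ ^ 4 := by
  have hn0 : (n : ℝ) ≠ 0 := by positivity
  have hη' : ∀ j, η j = y j - γ / n * μ₁ := by
    intro j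
    rw [hη, hT, Matrix.sub_mulVec, Matrix.one_mulVec, Matrix.smul_mulVec, hμ₁]
    simp [Matrix.mulVec, dotProduct]
  rw [pair_sum]
  have h1 : ∑ j, η j = μ₁ - n * (γ / n * μ₁) := by
    simp [hη', Finset.sum_sub_distrib, ← hμ₁]
  generalize hc : γ / n * μ₁ = c at hη' h1
  have h2 : ∑ j, η j ^ 2 = μ₂ - 2 * c * μ₁ + n * c ^ 2 := by
    have e : ∀ j, η j ^ 2 = y j ^ 2 - 2 * c * y j + c ^ 2 := by intro j; rw [hη']; ring
    simp [e, Finset.sum_sub_distrib, Finset.sum_add_distrib, ← Finset.mul_sum, ← hμ₁, ← hμ₂]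
  have h3 : ∑ j, η j ^ 3 = μ₃ - 3 * c * μ₂ + 3 * c ^ 2 * μ₁ - n * c ^ 3 := by
    have e : ∀ j, η j ^ 3 = y j ^ 3 - 3 * c * y j ^ 2 + 3 * c ^ 2 * y j - c ^ 3 := by
      intro j; rw [hη']; ring
    simp [e, Finset.sum_sub_distrib, Finset.sum_add_distrib, ← Finset.mul_sum, ← hμ₁, ← hμ₂,
      ← hμ₃]
  have h4 : ∑ j, η j ^ 4 = μ₄ - 4 * c * μ₃ + 6 * c ^ 2 * μ₂ - 4 * c ^ 3 * μ₁ + n * c ^ 4 := by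
    have e : ∀ j, η j ^ 4 = y j ^ 4 - 4 * c * y j ^ 3 + 6 * c ^ 2 * y j ^ 2 - 4 * c ^ 3 * y j
        + c ^ 4 := by
      intro j; rw [hη']; ring
    simp [e, Finset.sum_sub_distrib, Finset.sum_add_distrib, ← Finset.mul_sum, ← hμ₁, ← hμ₂,
      ← hμ₃, ← hμ₄]
  rw [h1, h2, h3, h4, ← hc]
  clear hγ
  field_simp
  ring
end

section
/- Fix t with 0 < t and (2/3)(2t)² < 1, and fix 0 < δ < 1/4. Let a: (0,∞) → ℝ be any function with a(m) → 2/3 as m → ∞. Then there exist C > 0 and M > 0 such that for all m ≥ M, ∫_{−2t}^{2t} exp( −m x² + a(m) m x⁴ ) dx ≤ √(π/m) ( 1 + C m^{−1+4δ} ). -/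
open Real Filter MeasureTheory

theorem ptwise (c A m x : ℝ) (hc : 0 < c) (hA0 : 0 < A) (hA1 : A < 1) (hm : 0 < m)
    (hx : A * x ^ 2 ≤ 1 - c) :
    Real.exp (-m * x ^ 2 + A * m * x ^ 4) ≤
      Real.exp (-m * x ^ 2) + 8 / (c ^ 2 * m) * Real.exp (-(c / 2 * m) * x ^ 2) := by
  set u := A * m * x ^ 4 with hu
  have hu0 : 0 ≤ u := by positivity
  have h1 : Real.exp u ≤ 1 + u * Real.exp u := by
    have h := Real.add_one_le_exp (-u)
    have h2 : Real.exp (-u) * Real.exp u = 1 := by rw [← Real.exp_add]; simp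
    nlinarith [Real.exp_pos u]
  have hsq : 0 ≤ x ^ 2 := sq_nonneg x
  have h3 : Real.exp (-m * x ^ 2 + u) ≤ Real.exp (-(c * m) * x ^ 2) := by
    apply Real.exp_le_exp.mpr
    have : (m * x ^ 2) * (A * x ^ 2) ≤ (m * x ^ 2) * (1 - c) :=
      mul_le_mul_of_nonneg_left hx (by positivity)
    rw [hu]; nlinarith
  set y := c / 2 * m * x ^ 2 with hy
  have hy0 : 0 ≤ y := by positivity
  have h4 : y ^ 2 ≤ 2 * Real.exp y := by
    have := Real.quadratic_le_exp_of_nonneg hy0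
    linarith
  have h5 : u ≤ 8 / (c ^ 2 * m) * Real.exp y := by
    have e : u = A * (4 / (c ^ 2 * m) * y ^ 2) := by
      rw [hu, hy]; field_simp; ring
    have p : 0 < 4 / (c ^ 2 * m) := by positivity
    have q : 4 / (c ^ 2 * m) * y ^ 2 ≤ 4 / (c ^ 2 * m) * (2 * Real.exp y) :=
      mul_le_mul_of_nonneg_left h4 p.le
    have r : 0 ≤ 4 / (c ^ 2 * m) * y ^ 2 := by positivity
    have s : 8 / (c ^ 2 * m) * Real.exp y = 4 / (c ^ 2 * m) * (2 * Real.exp y) := by ring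
    rw [s, e]; nlinarith
  have h6 : Real.exp y * Real.exp (-(c * m) * x ^ 2) = Real.exp (-(c / 2 * m) * x ^ 2) := by
    rw [← Real.exp_add]; congr 1; rw [hy]; ring
  calc Real.exp (-m * x ^ 2 + u) = Real.exp (-m * x ^ 2) * Real.exp u := Real.exp_add _ _
    _ ≤ Real.exp (-m * x ^ 2) * (1 + u * Real.exp u) := by gcongr
    _ = Real.exp (-m * x ^ 2) + u * Real.exp (-m * x ^ 2 + u) := by rw [Real.exp_add]; ring
    _ ≤ Real.exp (-m * x ^ 2) + (8 / (c ^ 2 * m) * Real.exp y) * Real.exp (-(c * m) * x ^ 2) := by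
        gcongr
    _ = _ := by rw [mul_assoc, h6]

theorem stmt18 (t δ : ℝ) (ht : 0 < t) (ht2 : (2 / 3) * (2 * t) ^ 2 < 1)
    (hδ1 : 0 < δ) (hδ2 : δ < 1 / 4)
    (a : ℝ → ℝ) (ha : Tendsto a atTop (nhds (2 / 3))) :
    ∃ C > 0, ∃ M > 0, ∀ m ≥ M,
      (∫ x in Set.Icc (-(2 * t)) (2 * t),
          Real.exp (-m * x ^ 2 + a m * m * x ^ 4)) ≤
        Real.sqrt (π / m) * (1 + C * m ^ (-1 + 4 * δ)) := by
  obtain ⟨c, hc, hc1⟩ : ∃ c : ℝ, 0 < c ∧ (2 / 3) * (2 * t) ^ 2 < 1 - c :=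
    ⟨(1 - (2 / 3) * (2 * t) ^ 2) / 2, by linarith, by linarith⟩
  have e1 : ∀ᶠ m in atTop, 0 < a m := ha.eventually_const_lt (by norm_num)
  have e2 : ∀ᶠ m in atTop, a m < 1 := ha.eventually_lt_const (by norm_num)
  have e3 : ∀ᶠ m in atTop, a m * (2 * t) ^ 2 < 1 - c :=
    (ha.mul_const ((2 * t) ^ 2)).eventually_lt_const hc1
  obtain ⟨M, hM⟩ := eventually_atTop.mp (e1.and (e2.and e3))
  refine ⟨8 / c ^ 2 * √(2 / c), by positivity, max M 1, by positivity, fun m hm => ?_⟩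
  obtain ⟨h1, h2, h3⟩ := hM m (le_trans (le_max_left _ _) hm)
  have hm1 : 1 ≤ m := le_trans (le_max_right _ _) hm
  have hm0 : 0 < m := by linarith
  have i1 := integrable_exp_neg_mul_sq hm0
  have i2 := (integrable_exp_neg_mul_sq (b := c / 2 * m) (by positivity)).const_mul
    (8 / (c ^ 2 * m))
  calc _ ≤ ∫ x in Set.Icc (-(2 * t)) (2 * t), (Real.exp (-m * x ^ 2) +
          8 / (c ^ 2 * m) * Real.exp (-(c / 2 * m) * x ^ 2)) := by
        apply setIntegral_mono_on
        · exact (by fun_prop : Continuous fun x : ℝ =>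
            Real.exp (-m * x ^ 2 + a m * m * x ^ 4)).continuousOn.integrableOn_Icc
        · exact (i1.add i2).integrableOn
        · exact measurableSet_Icc
        · intro x hx
          apply ptwise c (a m) m x hc h1 h2 hm0
          have : x ^ 2 ≤ (2 * t) ^ 2 := sq_le_sq' hx.1 hx.2
          nlinarith
    _ ≤ ∫ x, (Real.exp (-m * x ^ 2) +
          8 / (c ^ 2 * m) * Real.exp (-(c / 2 * m) * x ^ 2)) := by
        apply setIntegral_le_integral (i1.add i2)
        exact ae_of_all _ (fun x => by simp only [Pi.zero_apply, Pi.add_apply]; positivity)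
    _ = √(π / m) + 8 / (c ^ 2 * m) * √(π / (c / 2 * m)) := by
        rw [integral_add i1 i2, integral_const_mul, integral_gaussian, integral_gaussian]
    _ = √(π / m) * (1 + 8 / c ^ 2 * √(2 / c) * m⁻¹) := by
        have : π / (c / 2 * m) = π / m * (2 / c) := by field_simp
        rw [this, Real.sqrt_mul (by positivity)]
        field_simp
    _ ≤ _ := by
        have : m⁻¹ ≤ m ^ (-1 + 4 * δ) := by
          rw [← Real.rpow_neg_one]
          exact Real.rpow_le_rpow_of_exponent_le hm1 (by linarith)
        gcongr
end
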